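/- arXiv:math/0009012 — 2 statements merged into one kernel-verified Lean document; each statement's English description precedes it below -/
import Mathlib

section
/- Let λ > μ > 0 and x_0 ∈ ℝ. Then the total interaction between the two families of backward-scheme fundamental solutions with speeds λ and μ (the latter shifted by x_0) is given explicitly by: ∑_{n=1}^∞ ∫_ℝ G_{n,λ}(x) · G_{n,μ}(x − x_0) dx = 1/(λ − μ) if x_0 ≥ 0, and = (1/(λ − μ)) · exp( ((λ − μ)/(λμ)) · x_0 ) if x_0 < 0. -/
open MeasureTheory Real

/-- Gamma density `G_{n,λ}`: fundamental solution at step `n` of the backward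
semigroup scheme `v_n - v_{n-1} + λ ∂ₓ v_n = 0` with initial datum a Dirac delta. -/
noncomputable def gammaDensity (n : ℕ) (lam : ℝ) (x : ℝ) : ℝ :=
  if 0 ≤ x then x ^ (n - 1) * Real.exp (-x / lam) / (lam ^ n * (Nat.factorial (n - 1))) else 0

/-!
A translation exchanges `λ` and `μ` and changes the sign of `x₀`, so we may assume
`x₀ = -a ≤ 0`. Expanding `(x + a) ^ n` in the `n + 1`-st overlap integral and integrating termwise
turns the total interaction into a double series of nonnegative terms indexed by `(k, m)` with
`k + m = n`. It is symmetric in `λ` and `μ` apart from a factor `exp (-a / μ)`, so let `μ < λ`.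
Summed over `m` first, it is a multiple of `∑ₘ C(2m + k, m) zᵐ` with `z = λμ / (λ + μ)²`, and what
remains is an exponential series in `k`.

With `z = t (1 - t)` and `‖t‖ < 1/2`, Pascal's rule makes `S k = ∑ₘ C(2m + k, m) zᵐ` a solution of
`S (k + 1) = S k + z S (k + 2)`, whose characteristic roots are `1 / (1 - t)` and `1 / t`. Since
`S k = O(2 ^ k)` and `2 < ‖1 / t‖`, only the first root contributes.
-/

open Filter Finset Topology
open scoped Nat

section Summation

theorem hasSum_prod_of_nonneg {α β : Type*} {f : α × β → ℝ} {g : α → ℝ} {s : ℝ} (hf : 0 ≤ f)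
    (hrow : ∀ a, HasSum (fun b ↦ f (a, b)) (g a)) (hg : HasSum g s) : HasSum f s := by
  have hsum : Summable f := (summable_prod_of_nonneg hf).2
    ⟨fun a ↦ (hrow a).summable, hg.summable.congr fun a ↦ (hrow a).tsum_eq.symm⟩
  exact (hsum.hasSum.prod_fiberwise hrow).unique hg ▸ hsum.hasSum

theorem hasSum_sum_antidiagonal {A M : Type*} [AddMonoid A] [HasAntidiagonal A]
    [AddCommMonoid M] [TopologicalSpace M] [ContinuousAdd M] [RegularSpace M]
    {f : A × A → M} {s : M} (hf : HasSum f s) :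
    HasSum (fun n ↦ ∑ p ∈ antidiagonal n, f p) s := by
  refine HasSum.sigma (HasAntidiagonal.sigmaAntidiagonalEquivProd.hasSum_iff.2 hf) fun n ↦ ?_
  exact (antidiagonal n).hasSum f

theorem eq_zero_of_eq_mul_succ {R : Type*} [NormedRing R] [NormOneClass R] {D : ℕ → R} {t : R}
    {C r : ℝ} (hrec : ∀ k, D k = t * D (k + 1)) (hD : ∀ k, ‖D k‖ ≤ C * r ^ k) (hr : 0 ≤ r)
    (htr : ‖t‖ * r < 1) (k : ℕ) : D k = 0 := by
  have hiter (j : ℕ) : D k = t ^ j * D (k + j) := by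
    induction j with
    | zero => simp
    | succ j ih => rw [ih, hrec (k + j), pow_succ, mul_assoc, add_assoc]
  have hbound (j : ℕ) : ‖D k‖ ≤ C * r ^ k * (‖t‖ * r) ^ j :=
    calc ‖D k‖ = ‖t ^ j * D (k + j)‖ := by rw [← hiter j]
      _ ≤ ‖t‖ ^ j * (C * r ^ (k + j)) :=
        (norm_mul_le _ _).trans (by gcongr; exacts [norm_pow_le t j, hD _])
      _ = C * r ^ k * (‖t‖ * r) ^ j := by ring
  have hlim : Tendsto (fun j ↦ C * r ^ k * (‖t‖ * r) ^ j) atTop (𝓝 0) := by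
    simpa only [mul_zero] using
      (tendsto_pow_atTop_nhds_zero_of_lt_one (by positivity) htr).const_mul (C * r ^ k)
  exact norm_le_zero_iff.1 (ge_of_tendsto' hlim hbound)

end Summation

section BinomialSeries

theorem choose_two_mul_succ (m : ℕ) : (2 * (m + 1)).choose (m + 1) = 2 * (2 * m + 1).choose m := by
  rw [mul_add_one, Nat.choose_succ_succ', Nat.choose_symm_half, ← two_mul]

theorem choose_two_mul_succ_add_succ (m k : ℕ) :
    (2 * (m + 1) + (k + 1)).choose (m + 1) =
      (2 * (m + 1) + k).choose (m + 1) + (2 * m + (k + 2)).choose m := by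
  rw [← add_assoc, Nat.choose_succ_succ', add_comm, mul_add_one, add_assoc, add_comm 2 k]

variable {𝕜 : Type*} [RCLike 𝕜] {z t : 𝕜}

/-- The series `∑ₘ C(2m + k, m) zᵐ` along a column of Pascal's triangle parallel to the central
one; `k = 0` gives the generating function of the central binomial coefficients. -/
noncomputable def binomialSeriesAlong (z : 𝕜) (k : ℕ) : 𝕜 :=
  ∑' m : ℕ, ((2 * m + k).choose m : 𝕜) * z ^ m

theorem norm_choose_mul_pow_le (z : 𝕜) (k m : ℕ) :
    ‖((2 * m + k).choose m : 𝕜) * z ^ m‖ ≤ 2 ^ k * (4 * ‖z‖) ^ m := by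
  have hchoose : ((2 * m + k).choose m : ℝ) ≤ 2 ^ (2 * m + k) :=
    mod_cast Nat.choose_le_two_pow _ _
  calc ‖((2 * m + k).choose m : 𝕜) * z ^ m‖ = (2 * m + k).choose m * ‖z‖ ^ m := by
        rw [norm_mul, norm_pow, RCLike.norm_natCast]
    _ ≤ 2 ^ (2 * m + k) * ‖z‖ ^ m := by gcongr
    _ = 2 ^ k * (4 * ‖z‖) ^ m := by rw [pow_add, pow_mul, mul_pow]; norm_num; ring

theorem hasSum_two_pow_mul_geometric (hz : 4 * ‖z‖ < 1) (k : ℕ) :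
    HasSum (fun m : ℕ ↦ 2 ^ k * (4 * ‖z‖) ^ m) (2 ^ k * (1 - 4 * ‖z‖)⁻¹) :=
  (hasSum_geometric_of_lt_one (by positivity) hz).mul_left _

theorem summable_choose_mul_pow (hz : 4 * ‖z‖ < 1) (k : ℕ) :
    Summable fun m : ℕ ↦ ((2 * m + k).choose m : 𝕜) * z ^ m :=
  .of_norm_bounded (hasSum_two_pow_mul_geometric hz k).summable (norm_choose_mul_pow_le z k)

theorem norm_binomialSeriesAlong_le (hz : 4 * ‖z‖ < 1) (k : ℕ) :
    ‖binomialSeriesAlong z k‖ ≤ 2 ^ k * (1 - 4 * ‖z‖)⁻¹ :=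
  tsum_of_norm_bounded (hasSum_two_pow_mul_geometric hz k) (norm_choose_mul_pow_le z k)

theorem binomialSeriesAlong_zero (hz : 4 * ‖z‖ < 1) :
    binomialSeriesAlong z 0 = 1 + 2 * z * binomialSeriesAlong z 1 := by
  rw [binomialSeriesAlong, (summable_choose_mul_pow hz 0).tsum_eq_zero_add, binomialSeriesAlong,
    ← tsum_mul_left]
  congr 1
  · simp
  · refine tsum_congr fun m ↦ ?_
    rw [add_zero, choose_two_mul_succ]
    push_cast
    ring

theorem binomialSeriesAlong_succ (hz : 4 * ‖z‖ < 1) (k : ℕ) :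
    binomialSeriesAlong z (k + 1) =
      binomialSeriesAlong z k + z * binomialSeriesAlong z (k + 2) := by
  have hS := summable_choose_mul_pow hz
  simp only [binomialSeriesAlong]
  rw [(hS (k + 1)).tsum_eq_zero_add, (hS k).tsum_eq_zero_add, ← tsum_mul_left, add_assoc,
    ← ((summable_nat_add_iff 1).2 (hS k)).tsum_add ((hS (k + 2)).mul_left z)]
  congr 1
  · simp
  · refine tsum_congr fun m ↦ ?_
    rw [choose_two_mul_succ_add_succ]
    push_cast
    ring

theorem binomialSeriesAlong_succ_mul_one_sub (ht : ‖t‖ < 1 / 2) (hz : 4 * ‖t * (1 - t)‖ < 1)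
    (k : ℕ) :
    binomialSeriesAlong (t * (1 - t)) (k + 1) * (1 - t) = binomialSeriesAlong (t * (1 - t)) k := by
  set S := binomialSeriesAlong (t * (1 - t))
  set B := (1 - 4 * ‖t * (1 - t)‖)⁻¹
  have hrec (k : ℕ) : S (k + 1) * (1 - t) - S k = t * (S (k + 2) * (1 - t) - S (k + 1)) := by
    linear_combination binomialSeriesAlong_succ hz k
  have hbound (k : ℕ) : ‖S (k + 1) * (1 - t) - S k‖ ≤ (2 * ‖1 - t‖ + 1) * B * 2 ^ k :=
    calc ‖S (k + 1) * (1 - t) - S k‖ ≤ ‖S (k + 1)‖ * ‖1 - t‖ + ‖S k‖ :=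
          (norm_sub_le _ _).trans_eq (by rw [norm_mul])
      _ ≤ 2 ^ (k + 1) * B * ‖1 - t‖ + 2 ^ k * B := by
          gcongr <;> exact norm_binomialSeriesAlong_le hz _
      _ = (2 * ‖1 - t‖ + 1) * B * 2 ^ k := by ring
  exact sub_eq_zero.1 <| eq_zero_of_eq_mul_succ hrec hbound zero_le_two (by linarith) k

theorem binomialSeriesAlong_mul_one_sub_eq (ht : ‖t‖ < 1 / 2) (hz : 4 * ‖t * (1 - t)‖ < 1) (k : ℕ) :
    binomialSeriesAlong (t * (1 - t)) k = (1 - 2 * t)⁻¹ * (1 - t)⁻¹ ^ k := by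
  have h1t : 1 - t ≠ 0 := sub_ne_zero.2 fun h ↦ by norm_num [← h] at ht
  have hratio := binomialSeriesAlong_succ_mul_one_sub ht hz
  induction k with
  | zero =>
    rw [pow_zero, mul_one]
    refine eq_inv_of_mul_eq_one_left ?_
    linear_combination binomialSeriesAlong_zero hz + 2 * t * hratio 0
  | succ k ih => rw [pow_succ, ← mul_assoc, ← ih, ← hratio k, mul_inv_cancel_right₀ h1t]

theorem hasSum_choose_mul_pow (ht : ‖t‖ < 1 / 2) (hz : 4 * ‖t * (1 - t)‖ < 1) (k : ℕ) :
    HasSum (fun m : ℕ ↦ ((2 * m + k).choose m : 𝕜) * (t * (1 - t)) ^ m)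
      ((1 - 2 * t)⁻¹ * (1 - t)⁻¹ ^ k) :=
  binomialSeriesAlong_mul_one_sub_eq ht hz k ▸ (summable_choose_mul_pow hz k).hasSum

end BinomialSeries

section LaplaceIntegrals

variable {r : ℝ}

theorem integral_pow_mul_exp_neg_mul_Ioi (hr : 0 < r) (n : ℕ) :
    ∫ y in Set.Ioi (0 : ℝ), y ^ n * exp (-(r * y)) = n ! / r ^ (n + 1) := by
  have h := integral_rpow_mul_exp_neg_mul_Ioi (a := (n : ℝ) + 1) (by positivity) hr
  simp only [add_sub_cancel_right, rpow_natCast, Gamma_nat_eq_factorial] at h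
  rw [h, ← Nat.cast_add_one, rpow_natCast, one_div_pow, one_div_mul_eq_div]

theorem integrableOn_pow_mul_exp_neg_mul_Ioi (hr : 0 < r) (n : ℕ) :
    IntegrableOn (fun y : ℝ ↦ y ^ n * exp (-(r * y))) (Set.Ioi 0) := by
  refine Integrable.of_integral_ne_zero ?_
  rw [integral_pow_mul_exp_neg_mul_Ioi hr]
  positivity

theorem integral_pow_mul_add_pow_mul_exp_neg_mul_Ioi (hr : 0 < r) (a : ℝ) (i j : ℕ) :
    ∫ y in Set.Ioi (0 : ℝ), y ^ i * (a + y) ^ j * exp (-(r * y)) =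
      ∑ p ∈ antidiagonal j, j.choose p.1 * a ^ p.1 * ((i + p.2)! / r ^ (i + p.2 + 1)) := by
  have hexpand (y : ℝ) : y ^ i * (a + y) ^ j * exp (-(r * y)) =
      ∑ p ∈ antidiagonal j, j.choose p.1 * a ^ p.1 * (y ^ (i + p.2) * exp (-(r * y))) := by
    rw [(Commute.all a y).add_pow', mul_sum, sum_mul]
    refine sum_congr rfl fun p _ ↦ ?_
    rw [nsmul_eq_mul]
    ring
  simp_rw [hexpand]
  rw [integral_finsetSum _ fun p _ ↦ (integrableOn_pow_mul_exp_neg_mul_Ioi hr _).const_mul _]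
  simp_rw [integral_const_mul, integral_pow_mul_exp_neg_mul_Ioi hr]

end LaplaceIntegrals

section DoubleSeries

variable {lam mu a : ℝ}

/-- The double series into which the total interaction decomposes: the terms with `k + m = n` arise
from the `n + 1`-st overlap integral at distance `a`, up to the factor `exp (-a / mu)`. -/
noncomputable def gammaInteractionTerm (lam mu a : ℝ) (p : ℕ × ℕ) : ℝ :=
  a ^ p.1 / p.1 ! / (lam + mu) ^ (p.1 + 1) *
    ((2 * p.2 + p.1).choose p.2 * (lam * mu / (lam + mu) ^ 2) ^ p.2)

theorem gammaInteractionTerm_comm (lam mu a : ℝ) :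
    gammaInteractionTerm lam mu a = gammaInteractionTerm mu lam a := by
  funext p
  rw [gammaInteractionTerm, gammaInteractionTerm, add_comm lam, mul_comm lam]

theorem hasSum_gammaInteractionTerm_row (hmu : 0 < mu) (hlm : mu < lam) (a : ℝ) (k : ℕ) :
    HasSum (fun m ↦ gammaInteractionTerm lam mu a (k, m))
      ((lam - mu)⁻¹ * ((a / lam) ^ k / k !)) := by
  have hl : 0 < lam := hmu.trans hlm
  have hd : lam - mu ≠ 0 := (sub_pos.2 hlm).ne'
  set t := mu / (lam + mu) with ht
  have ht1 : 1 - t = lam / (lam + mu) := by rw [ht]; field_simp; ring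
  have ht2 : 1 - 2 * t = (lam - mu) / (lam + mu) := by rw [ht]; field_simp; ring
  have htz : t * (1 - t) = lam * mu / (lam + mu) ^ 2 := by
    rw [ht1, ht, div_mul_div_comm, mul_comm mu, sq]
  have htpos : 0 < t := by positivity
  have htlt : t < 1 / 2 := by rw [ht, div_lt_div_iff₀ (by positivity) two_pos]; linarith
  have hzlt : 4 * (t * (1 - t)) < 1 := by nlinarith [sq_pos_of_pos (sub_pos.2 htlt)]
  have hzpos : 0 < t * (1 - t) := mul_pos htpos (by linarith)
  have h := hasSum_choose_mul_pow (t := t) (by rwa [norm_of_nonneg htpos.le])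
    (by rwa [norm_of_nonneg hzpos.le]) k
  rw [htz, ht1, ht2] at h
  have hcoeff : (lam - mu)⁻¹ * ((a / lam) ^ k / k !) = a ^ k / k ! / (lam + mu) ^ (k + 1) *
      (((lam - mu) / (lam + mu))⁻¹ * (lam / (lam + mu))⁻¹ ^ k) := by
    rw [inv_div, inv_div, div_pow, div_pow, pow_succ']
    field_simp
  exact hcoeff ▸ h.mul_left _

theorem hasSum_gammaInteractionTerm (hmu : 0 < mu) (hl : 0 < lam) (hne : lam ≠ mu) (ha : 0 ≤ a) :
    HasSum (gammaInteractionTerm lam mu a) (exp (a / max lam mu) / |lam - mu|) := by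
  wlog hlm : mu < lam generalizing lam mu
  · rw [gammaInteractionTerm_comm, max_comm, abs_sub_comm]
    exact this hl hmu hne.symm (hne.lt_of_le (not_lt.1 hlm))
  have hnonneg : 0 ≤ gammaInteractionTerm lam mu a := fun p ↦ by
    rw [Pi.zero_apply, gammaInteractionTerm]
    positivity
  have hexp : HasSum (fun k : ℕ ↦ (a / lam) ^ k / k !) (exp (a / lam)) := by
    rw [exp_eq_exp_ℝ]
    exact NormedSpace.expSeries_div_hasSum_exp (a / lam)
  rw [max_eq_left hlm.le, abs_of_pos (sub_pos.2 hlm), div_eq_inv_mul]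
  exact hasSum_prod_of_nonneg hnonneg (hasSum_gammaInteractionTerm_row hmu hlm a)
    (hexp.mul_left _)

theorem gammaInteractionTerm_eq (hmu : mu ≠ 0) (hl : lam ≠ 0) (hs : lam + mu ≠ 0) (a : ℝ)
    (k m : ℕ) :
    gammaInteractionTerm lam mu a (k, m) = ((k + m)! ^ 2 * (lam * mu) ^ (k + m + 1) : ℝ)⁻¹ *
      ((k + m).choose k * a ^ k *
        ((k + m + m)! / ((lam + mu) / (lam * mu)) ^ (k + m + m + 1))) := by
  have hchoose : ((2 * m + k).choose m : ℝ) = (k + m + m)! / (m ! * (k + m)!) := by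
    rw [show 2 * m + k = m + (k + m) by ring, Nat.cast_add_choose, add_comm m]
  simp only [gammaInteractionTerm]
  rw [hchoose, Nat.cast_add_choose]
  generalize lam + mu = s at hs ⊢
  rw [div_pow, div_pow, ← pow_mul]
  field_simp
  ring

end DoubleSeries

/-- The overlap integral `∫ G_{n,λ}(x) G_{n,μ}(x - x₀) dx`, whose sum over the steps `n ≥ 1` is the
total interaction. -/
noncomputable def gammaInteraction (n : ℕ) (lam mu x₀ : ℝ) : ℝ :=
  ∫ x : ℝ, gammaDensity n lam x * gammaDensity n mu (x - x₀)

section Interaction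

variable {lam mu : ℝ}

theorem gammaInteraction_swap (n : ℕ) (lam mu x₀ : ℝ) :
    gammaInteraction n lam mu x₀ = gammaInteraction n mu lam (-x₀) := by
  rw [gammaInteraction, ← integral_add_right_eq_self _ x₀, gammaInteraction]
  simp_rw [add_sub_cancel_right, sub_neg_eq_add, mul_comm]

theorem gammaDensity_mul_gammaDensity_add (hmu : mu ≠ 0) (hl : lam ≠ 0) {a : ℝ} (ha : 0 ≤ a)
    (n : ℕ) (x : ℝ) :
    gammaDensity (n + 1) lam x * gammaDensity (n + 1) mu (x + a) =
      (Set.Ici 0).indicator (fun y ↦ exp (-a / mu) * ((n ! ^ 2 * (lam * mu) ^ (n + 1) : ℝ)⁻¹ *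
        (y ^ n * (a + y) ^ n * exp (-((lam + mu) / (lam * mu) * y))))) x := by
  by_cases hx : 0 ≤ x
  · have hexp : exp (-x / lam) * exp (-(x + a) / mu) =
        exp (-a / mu) * exp (-((lam + mu) / (lam * mu) * x)) := by
      rw [← exp_add, ← exp_add]
      congr 1
      field_simp
      ring
    rw [Set.indicator_of_mem (Set.mem_Ici.2 hx), gammaDensity, gammaDensity, if_pos hx,
      if_pos (add_nonneg hx ha), add_tsub_cancel_right, div_mul_div_comm, mul_mul_mul_comm, hexp,
      add_comm x a, mul_pow lam]
    field_simp
  · rw [Set.indicator_of_notMem (mt Set.mem_Ici.1 hx), gammaDensity, if_neg hx, zero_mul]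

theorem gammaInteraction_succ_neg (hmu : 0 < mu) (hl : 0 < lam) {a : ℝ} (ha : 0 ≤ a) (n : ℕ) :
    gammaInteraction (n + 1) lam mu (-a) =
      exp (-a / mu) * ∑ p ∈ antidiagonal n, gammaInteractionTerm lam mu a p := by
  simp_rw [gammaInteraction, sub_neg_eq_add,
    gammaDensity_mul_gammaDensity_add hmu.ne' hl.ne' ha n]
  rw [integral_indicator measurableSet_Ici, integral_Ici_eq_integral_Ioi, integral_const_mul,
    integral_const_mul, integral_pow_mul_add_pow_mul_exp_neg_mul_Ioi (by positivity), mul_sum]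
  congr 1
  refine sum_congr rfl fun ⟨k, m⟩ hp ↦ ?_
  obtain rfl : k + m = n := mem_antidiagonal.1 hp
  rw [gammaInteractionTerm_eq hmu.ne' hl.ne' (by positivity)]

theorem neg_div_add_div_max (hmu : 0 < mu) (hl : 0 < lam) {a : ℝ} (ha : 0 ≤ a) :
    -a / mu + a / max lam mu = min 0 ((lam - mu) / (lam * mu) * -a) := by
  rcases le_total mu lam with hlm | hlm
  · have hd : 0 ≤ (lam - mu) / (lam * mu) := div_nonneg (sub_nonneg.2 hlm) (by positivity)
    rw [max_eq_left hlm, min_eq_right (mul_nonpos_of_nonneg_of_nonpos hd (neg_nonpos.2 ha))]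
    field_simp
    ring
  · have hd : (lam - mu) / (lam * mu) ≤ 0 :=
      div_nonpos_of_nonpos_of_nonneg (sub_nonpos.2 hlm) (by positivity)
    rw [max_eq_right hlm, min_eq_left (mul_nonneg_of_nonpos_of_nonpos hd (neg_nonpos.2 ha)),
      neg_div, neg_add_cancel]

theorem hasSum_gammaInteraction_neg (hmu : 0 < mu) (hl : 0 < lam) (hne : lam ≠ mu) {a : ℝ}
    (ha : 0 ≤ a) :
    HasSum (fun n ↦ gammaInteraction (n + 1) lam mu (-a))
      (exp (min 0 ((lam - mu) / (lam * mu) * -a)) / |lam - mu|) := by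
  simp_rw [gammaInteraction_succ_neg hmu hl ha]
  rw [← neg_div_add_div_max hmu hl ha, exp_add, mul_div_assoc]
  exact (hasSum_sum_antidiagonal (hasSum_gammaInteractionTerm hmu hl hne ha)).mul_left _

end Interaction

theorem exp_min_zero_mul_div {c : ℝ} (hc : 0 ≤ c) (x d : ℝ) :
    exp (min 0 (c * x)) / d = if 0 ≤ x then 1 / d else 1 / d * exp (c * x) := by
  split_ifs with hx
  · rw [min_eq_left (mul_nonneg hc hx), exp_zero]
  · rw [min_eq_right (mul_nonpos_of_nonneg_of_nonpos hc (not_le.1 hx).le), one_div_mul_eq_div]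

theorem total_interaction_gamma_general (lam mu : ℝ) (hmu : 0 < mu) (hl : 0 < lam)
    (hne : lam ≠ mu) (x₀ : ℝ) :
    HasSum (fun n ↦ gammaInteraction (n + 1) lam mu x₀)
      (exp (min 0 ((lam - mu) / (lam * mu) * x₀)) / |lam - mu|) := by
  rcases le_total x₀ 0 with hx | hx
  · simpa only [neg_neg] using hasSum_gammaInteraction_neg hmu hl hne (neg_nonneg.2 hx)
  · have hexp : (lam - mu) / (lam * mu) * x₀ = (mu - lam) / (mu * lam) * -x₀ := by ring
    simp_rw [gammaInteraction_swap _ lam mu]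
    rw [hexp, abs_sub_comm]
    exact hasSum_gammaInteraction_neg hl hmu hne.symm hx

theorem total_interaction_gamma (lam mu : ℝ) (hmu : 0 < mu) (hlm : mu < lam) (x₀ : ℝ) :
    (∑' n : ℕ, ∫ x : ℝ, gammaDensity (n + 1) lam x * gammaDensity (n + 1) mu (x - x₀))
      = if 0 ≤ x₀ then 1 / (lam - mu)
        else (1 / (lam - mu)) * Real.exp ((lam - mu) / (lam * mu) * x₀) := by
  have hd : 0 < lam - mu := sub_pos.2 hlm
  have hl : 0 < lam := hmu.trans hlm
  have h := (total_interaction_gamma_general lam mu hmu hl hlm.ne' x₀).tsum_eq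
  rwa [abs_of_pos hd, exp_min_zero_mul_div (by positivity)] at h
end

section
/- Let λ > μ > 0 and let n_0 ∈ ℤ. Then the total interaction between the two families of semi-discrete fundamental solutions with speeds λ and μ (the latter started at position n_0) is given explicitly by: ∫_0^∞ ∑_{n ∈ ℤ} p_{n,λ}(t) · p_{n−n_0,μ}(t) dt = 1/(λ − μ) if n_0 ≥ 0, and = (1/(λ − μ)) · (λ/μ)^{n_0} if n_0 < 0. -/
open MeasureTheory

/-- Poisson density `p_{n,λ}(t)`: fundamental solution of the semi-discrete linear
equation `d/dt v_n + λ (v_n - v_{n-1}) = 0` with initial data `v_n(0) = δ_{n,0}`. -/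
noncomputable def poissonDensity (n : ℤ) (lam : ℝ) (t : ℝ) : ℝ :=
  if 0 ≤ n then (lam * t) ^ n.toNat * Real.exp (-lam * t) / (Nat.factorial n.toNat) else 0

/-!
For `n₀ = k ≥ 0`, integrating termwise with the Gamma integral gives
`∑ₘ C(2m+k, m) λ^(m+k) μ^m / (λ+μ)^(2m+k+1)`. With `B` the Catalan generating function,
`∑ₘ C(2m+k, m) z^m = B(z)^k / √(1 - 4z)`: for `k = 0` this is the binomial series, and Pascal's
rule together with `B = 1 + z B²` propagates it to all `k`. At `z = λμ / (λ+μ)²` the discriminant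
`1 - 4z = ((λ-μ) / (λ+μ))²` is a perfect square and `B(z) = (λ+μ) / max(λ, μ)`. Exchanging the two
families replaces `n₀` by `-n₀`.
-/

section CatalanGenFun

/-- The generating function `B(z) = (1 - √(1 - 4z)) / (2z)` of the Catalan numbers, in the
rationalized form, which has the correct value `1` at `z = 0`. -/
noncomputable def catalanGenFun (z : ℝ) : ℝ := 2 / (1 + √(1 - 4 * z))

lemma catalanGenFun_eq_one_add {z : ℝ} (hz : 4 * z ≤ 1) :
    catalanGenFun z = 1 + z * catalanGenFun z ^ 2 := by
  have hsq : √(1 - 4 * z) ^ 2 = 1 - 4 * z := Real.sq_sqrt (by linarith)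
  rw [catalanGenFun]
  field_simp
  linear_combination -hsq

lemma one_div_sqrt_one_sub_four_mul {z : ℝ} (hz : 4 * z < 1) :
    1 / √(1 - 4 * z) = 1 + 2 * z * (catalanGenFun z / √(1 - 4 * z)) := by
  have hsq : √(1 - 4 * z) ^ 2 = 1 - 4 * z := Real.sq_sqrt (by linarith)
  have hpos : 0 < √(1 - 4 * z) := Real.sqrt_pos.2 (by linarith)
  rw [catalanGenFun]
  field_simp
  linear_combination -hsq

lemma multichoose_one_half_eq_centralBinom_div (n : ℕ) :
    Ring.multichoose (1 / 2 : ℝ) n = n.centralBinom / 4 ^ n := by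
  have hasc (n : ℕ) :
      (n.factorial : ℝ) * Ring.multichoose (1 / 2 : ℝ) n = (ascPochhammer ℝ n).eval (1 / 2) := by
    rw [← nsmul_eq_mul, Ring.factorial_nsmul_multichoose_eq_ascPochhammer,
      Polynomial.ascPochhammer_smeval_eq_eval]
  induction n with
  | zero => simp
  | succ n ih =>
    have hcentral : ((n : ℝ) + 1) * (n + 1).centralBinom = 2 * (2 * n + 1) * n.centralBinom := by
      exact_mod_cast n.succ_mul_centralBinom_succ
    have hmultichoose := hasc (n + 1)
    rw [ascPochhammer_succ_eval, ← hasc n, ih, Nat.factorial_succ] at hmultichoose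
    push_cast at hmultichoose
    have hne : ((n : ℝ) + 1) * n.factorial ≠ 0 := by positivity
    apply mul_left_cancel₀ hne
    rw [hmultichoose, pow_succ]
    field_simp
    linear_combination -2 * hcentral

lemma hasSum_centralBinom_mul_pow {z : ℝ} (hz : |4 * z| < 1) :
    HasSum (fun m : ℕ => (m.centralBinom : ℝ) * z ^ m) (1 / √(1 - 4 * z)) := by
  have hmem : 4 * z ∈ Metric.eball (0 : ℝ) 1 := by
    rwa [← ENNReal.ofReal_one, Metric.eball_ofReal, mem_ball_zero_iff, Real.norm_eq_abs]
  have hsum := (Real.one_div_one_sub_rpow_hasFPowerSeriesOnBall_zero (1 / 2)).hasSum hmem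
  simp only [FormalMultilinearSeries.ofScalars_apply_eq, ← Ring.multichoose_eq,
    multichoose_one_half_eq_centralBinom_div, zero_add, ← Real.sqrt_eq_rpow, smul_eq_mul] at hsum
  refine hsum.congr_fun fun m => ?_
  rw [mul_pow]
  field_simp

lemma hasSum_choose_two_mul_add_one_mul_pow {z : ℝ} (hz : |4 * z| < 1) (hz0 : z ≠ 0) :
    HasSum (fun m : ℕ => ((2 * m + 1).choose m : ℝ) * z ^ m)
      (catalanGenFun z / √(1 - 4 * z)) := by
  have hchoose (m : ℕ) : (m + 1).centralBinom = 2 * (2 * m + 1).choose m := by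
    rw [Nat.centralBinom, show 2 * (m + 1) = 2 * m + 1 + 1 by ring, Nat.choose_succ_succ,
      Nat.choose_symm_half, ← two_mul]
  have hsum : HasSum (fun m : ℕ => ((m + 1).centralBinom : ℝ) * z ^ (m + 1))
      (2 * z * (catalanGenFun z / √(1 - 4 * z))) := by
    simpa [one_div_sqrt_one_sub_four_mul (abs_lt.1 hz).2] using
      (hasSum_nat_add_iff' 1).2 (hasSum_centralBinom_mul_pow hz)
  refine (hasSum_mul_left_iff (mul_ne_zero two_ne_zero hz0)).1 (hsum.congr_fun fun m => ?_)
  rw [hchoose]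
  push_cast
  ring

theorem hasSum_choose_two_mul_add_mul_pow {z : ℝ} (hz : |4 * z| < 1) (k : ℕ) :
    HasSum (fun m : ℕ => ((2 * m + k).choose m : ℝ) * z ^ m)
      (catalanGenFun z ^ k / √(1 - 4 * z)) := by
  obtain rfl | hz0 := eq_or_ne z 0
  · have hone : catalanGenFun 0 = 1 := by norm_num [catalanGenFun]
    simpa [hone] using hasSum_single (f := fun m : ℕ => ((2 * m + k).choose m : ℝ) * 0 ^ m) 0
      fun m hm => by simp [hm]
  induction k using Nat.twoStepInduction with
  | zero => simpa [Nat.centralBinom] using hasSum_centralBinom_mul_pow hz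
  | one => simpa using hasSum_choose_two_mul_add_one_mul_pow hz hz0
  | more k ih ih' =>
    have hpascal (m : ℕ) : (2 * (m + 1) + (k + 1)).choose (m + 1)
        = (2 * m + (k + 2)).choose m + (2 * (m + 1) + k).choose (m + 1) := by
      rw [show 2 * (m + 1) + (k + 1) = 2 * m + (k + 2) + 1 by ring, Nat.choose_succ_succ,
        show 2 * (m + 1) + k = 2 * m + (k + 2) by ring]
    have hvalue : z * (catalanGenFun z ^ (k + 2) / √(1 - 4 * z))
        = catalanGenFun z ^ (k + 1) / √(1 - 4 * z) - catalanGenFun z ^ k / √(1 - 4 * z) := by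
      linear_combination
        -catalanGenFun z ^ k / √(1 - 4 * z) * catalanGenFun_eq_one_add (abs_lt.1 hz).2.le
    have hsum := ((hasSum_nat_add_iff' 1).2 ih').sub ((hasSum_nat_add_iff' 1).2 ih)
    simp only [Finset.sum_range_one, mul_zero, Nat.choose_zero_right, pow_zero, Nat.cast_one,
      mul_one, sub_sub_sub_cancel_right, ← hvalue] at hsum
    refine (hasSum_mul_left_iff hz0).1 (hsum.congr_fun fun m => ?_)
    rw [hpascal]
    push_cast
    ring

lemma sqrt_one_sub_four_mul_mul_div_add_sq {a b : ℝ} (h : 0 < a + b) :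
    √(1 - 4 * (a * b / (a + b) ^ 2)) = |a - b| / (a + b) := by
  rw [show 1 - 4 * (a * b / (a + b) ^ 2) = ((a - b) / (a + b)) ^ 2 by field_simp; ring,
    Real.sqrt_sq_eq_abs, abs_div, abs_of_pos h]

lemma catalanGenFun_mul_div_add_sq {a b : ℝ} (h : 0 < a + b) :
    catalanGenFun (a * b / (a + b) ^ 2) = (a + b) / max a b := by
  have hmax : a + b + |a - b| = 2 * max a b := by
    rw [abs_sub_comm, ← two_nsmul_sup_eq_add_add_abs_sub, two_nsmul, two_mul]
  rw [catalanGenFun, sqrt_one_sub_four_mul_mul_div_add_sq h, one_add_div h.ne', hmax]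
  field_simp

end CatalanGenFun

lemma add_pos_of_nonneg_of_ne {M : Type*} [AddCommMonoid M] [LinearOrder M]
    [IsOrderedCancelAddMonoid M] {a b : M} (ha : 0 ≤ a) (hb : 0 ≤ b) (hab : a ≠ b) : 0 < a + b :=
  hab.lt_or_gt.elim (fun h => add_pos_of_nonneg_of_pos ha (ha.trans_lt h))
    fun h => add_pos_of_pos_of_nonneg (hb.trans_lt h) hb

section PoissonDensity

variable {a b t : ℝ}

@[simp]
lemma poissonDensity_natCast (n : ℕ) (a t : ℝ) :
    poissonDensity n a t = (a * t) ^ n * Real.exp (-a * t) / n.factorial := by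
  simp [poissonDensity]

lemma poissonDensity_of_neg {n : ℤ} (hn : n < 0) (a t : ℝ) : poissonDensity n a t = 0 :=
  if_neg hn.not_ge

lemma poissonDensity_nonneg (n : ℤ) (ha : 0 ≤ a) (ht : 0 ≤ t) : 0 ≤ poissonDensity n a t := by
  rw [poissonDensity]
  positivity

lemma tsum_poissonDensity_mul_sub_natCast (a b t : ℝ) (k : ℕ) :
    ∑' n : ℤ, poissonDensity n a t * poissonDensity (n - k) b t
      = ∑' m : ℕ, poissonDensity (m + k : ℕ) a t * poissonDensity m b t := by
  have hinj : Function.Injective fun m : ℕ => ((m + k : ℕ) : ℤ) := fun i j hij => by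
    simpa using hij
  rw [← hinj.tsum_eq]
  · simp
  · intro n hn
    have hnk : 0 ≤ n - k := by
      by_contra! hneg
      exact hn (mul_eq_zero_of_right _ (poissonDensity_of_neg hneg b t))
    exact ⟨(n - k).toNat, by push_cast; omega⟩

lemma tsum_poissonDensity_mul_sub_comm (a b t : ℝ) (n₀ : ℤ) :
    ∑' n : ℤ, poissonDensity n a t * poissonDensity (n - n₀) b t
      = ∑' n : ℤ, poissonDensity n b t * poissonDensity (n - -n₀) a t := by
  rw [← (Equiv.addRight n₀).tsum_eq]
  simp [mul_comm]

lemma integral_pow_mul_exp_neg_mul_Ioi_s10 {c : ℝ} (hc : 0 < c) (n : ℕ) :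
    ∫ t in Set.Ioi (0 : ℝ), t ^ n * Real.exp (-(c * t)) = n.factorial / c ^ (n + 1) := by
  have h := Real.integral_rpow_mul_exp_neg_mul_Ioi (a := n + 1) (by positivity) hc
  simp only [Real.Gamma_nat_eq_factorial, add_sub_cancel_right, Real.rpow_natCast] at h
  rw [h, ← Nat.cast_add_one, Real.rpow_natCast, one_div_pow, one_div_mul_eq_div]

lemma poissonDensity_natCast_mul_natCast (a b t : ℝ) (m n : ℕ) :
    poissonDensity m a t * poissonDensity n b t
      = a ^ m * b ^ n / (m.factorial * n.factorial)
        * (t ^ (m + n) * Real.exp (-((a + b) * t))) := by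
  have hexp : Real.exp (-((a + b) * t)) = Real.exp (-a * t) * Real.exp (-b * t) := by
    rw [← Real.exp_add]
    ring_nf
  rw [poissonDensity_natCast, poissonDensity_natCast, hexp]
  ring

lemma integrableOn_poissonDensity_mul (h : 0 < a + b) (m n : ℕ) :
    IntegrableOn (fun t => poissonDensity m a t * poissonDensity n b t) (Set.Ioi 0) := by
  simp only [poissonDensity_natCast_mul_natCast]
  refine Integrable.const_mul (.of_integral_ne_zero ?_) _
  rw [integral_pow_mul_exp_neg_mul_Ioi_s10 h]
  positivity

lemma integral_poissonDensity_mul (h : 0 < a + b) (m n : ℕ) :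
    ∫ t in Set.Ioi (0 : ℝ), poissonDensity m a t * poissonDensity n b t
      = (m + n).choose n * (a ^ m * b ^ n) / (a + b) ^ (m + n + 1) := by
  have hfac : ((m + n).choose n * m.factorial * n.factorial : ℝ) = (m + n).factorial :=
    mod_cast Nat.add_choose_mul_factorial_mul_factorial m n
  simp only [poissonDensity_natCast_mul_natCast]
  rw [integral_const_mul, integral_pow_mul_exp_neg_mul_Ioi_s10 h, ← hfac]
  field_simp

lemma hasSum_integral_poissonDensity_mul (ha : 0 ≤ a) (hb : 0 ≤ b) (hab : a ≠ b) (k : ℕ) :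
    HasSum (fun m : ℕ =>
        ∫ t in Set.Ioi (0 : ℝ), poissonDensity (m + k : ℕ) a t * poissonDensity m b t)
      ((a / max a b) ^ k / |a - b|) := by
  have hadd : 0 < a + b := add_pos_of_nonneg_of_ne ha hb hab
  have hdisc : |4 * (a * b / (a + b) ^ 2)| < 1 := by
    have : 0 < (a - b) ^ 2 := pow_two_pos_of_ne_zero (sub_ne_zero.2 hab)
    rw [abs_of_nonneg (by positivity), ← mul_div_assoc, div_lt_one (by positivity)]
    linarith
  have hvalue : a ^ k / (a + b) ^ (k + 1) * (catalanGenFun (a * b / (a + b) ^ 2) ^ k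
      / √(1 - 4 * (a * b / (a + b) ^ 2))) = (a / max a b) ^ k / |a - b| := by
    rw [catalanGenFun_mul_div_add_sq hadd, sqrt_one_sub_four_mul_mul_div_add_sq hadd,
      div_pow, div_pow]
    field_simp
    ring
  have hseries := (hasSum_choose_two_mul_add_mul_pow hdisc k).mul_left
    (a ^ k / (a + b) ^ (k + 1))
  rw [hvalue] at hseries
  refine hseries.congr_fun fun m => ?_
  rw [integral_poissonDensity_mul hadd, show m + k + m = 2 * m + k by ring, div_pow, mul_pow,
    ← pow_mul]
  field_simp
  ring

theorem integral_tsum_poissonDensity_mul_sub_natCast (ha : 0 ≤ a) (hb : 0 ≤ b) (hab : a ≠ b)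
    (k : ℕ) :
    ∫ t in Set.Ioi (0 : ℝ), ∑' n : ℤ, poissonDensity n a t * poissonDensity (n - k) b t
      = (a / max a b) ^ k / |a - b| := by
  have hadd : 0 < a + b := add_pos_of_nonneg_of_ne ha hb hab
  have hseries := hasSum_integral_poissonDensity_mul ha hb hab k
  have hnorm (m : ℕ) :
      ∫ t in Set.Ioi (0 : ℝ), ‖poissonDensity (m + k : ℕ) a t * poissonDensity m b t‖
        = ∫ t in Set.Ioi (0 : ℝ), poissonDensity (m + k : ℕ) a t * poissonDensity m b t :=
    setIntegral_congr_fun measurableSet_Ioi fun t ht => Real.norm_of_nonneg <|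
      mul_nonneg (poissonDensity_nonneg _ ha (le_of_lt ht))
        (poissonDensity_nonneg _ hb (le_of_lt ht))
  simp only [tsum_poissonDensity_mul_sub_natCast]
  rw [← integral_tsum_of_summable_integral_norm
    (fun m => integrableOn_poissonDensity_mul hadd (m + k) m)
    (by simpa only [hnorm] using hseries.summable), hseries.tsum_eq]

end PoissonDensity

theorem total_interaction_poisson_general (lam mu : ℝ) (hlam : 0 < lam) (hmu : 0 < mu)
    (hne : lam ≠ mu) (n₀ : ℤ) :
    (∫ t in Set.Ioi (0 : ℝ), ∑' n : ℤ, poissonDensity n lam t * poissonDensity (n - n₀) mu t)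
      = min 1 ((lam / mu) ^ n₀) / |lam - mu| := by
  induction n₀ using Int.negInduction generalizing lam mu with
  | nat k =>
    rw [integral_tsum_poissonDensity_mul_sub_natCast hlam.le hmu.le hne]
    congr 1
    obtain h | h := hne.lt_or_gt
    · rw [max_eq_right h.le, zpow_natCast,
        min_eq_right (pow_le_one₀ (by positivity) ((div_le_one hmu).2 h.le))]
    · rw [max_eq_left h.le, zpow_natCast, div_self hlam.ne', one_pow,
        min_eq_left (one_le_pow₀ ((one_le_div hmu).2 h.le))]
  | neg ih k =>
    simp only [tsum_poissonDensity_mul_sub_comm lam mu, neg_neg]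
    rw [ih k mu lam hmu hlam hne.symm, abs_sub_comm, zpow_neg, ← inv_zpow, inv_div]

theorem total_interaction_poisson (lam mu : ℝ) (hmu : 0 < mu) (hlm : mu < lam) (n₀ : ℤ) :
    (∫ t in Set.Ioi (0 : ℝ), ∑' n : ℤ, poissonDensity n lam t * poissonDensity (n - n₀) mu t)
      = if 0 ≤ n₀ then 1 / (lam - mu)
        else (1 / (lam - mu)) * (lam / mu) ^ n₀ := by
  have hratio : 1 ≤ lam / mu := (one_le_div hmu).2 hlm.le
  rw [total_interaction_poisson_general lam mu (hmu.trans hlm) hmu hlm.ne',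
    abs_of_pos (sub_pos.2 hlm)]
  split_ifs with h
  · rw [min_eq_left (one_le_zpow₀ hratio h)]
  · rw [min_eq_right (zpow_le_one_of_nonpos₀ hratio (le_of_not_ge h)), one_div_mul_eq_div]
end
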